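/- arXiv:1409.5881 — 3 statements merged into one kernel-verified Lean document; each statement's English description precedes it below -/
import Mathlib

section
/- Let λ: ℝ → ℂ be a continuous positive definite function with λ(0)=1. Then there exists a probability measure μ on ℝ with λ(x) = ∫_ℝ exp(i x y) dμ(y) for all x ∈ ℝ. -/
/-!
The measure is obtained as a weak limit of measures built from the values of `lam` on finer and
finer grids.

Restrict `lam` to the `N = M²` grid points `j / M`. Testing positive definiteness with the
coefficients `e^{-ijθ}` gives a nonnegative trigonometric polynomial, that is, the density of a
probability measure `ν` on `(-π, π]` with `∫ e^{ikθ} dν = (1 - k/N) lam (k/M)` for `0 ≤ k ≤ N`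
(`exists_measure_of_discrete`). Dilating `ν` by `M` gives a measure whose characteristic function
`φ` satisfies `φ (k/M) = (1 - k/N) lam (k/M)`.

Between grid points, `φ` is controlled by its value at the first one: since `ν` lives on `[-π, π]`,
`|φ (k/M + r/M) - φ (k/M)|² ≤ 2 (1 - Re φ (1/M))` for `0 ≤ r ≤ 1` (`norm_charFun_sub_sq_le`), and the
right side tends to `0` because `lam` is continuous at `0` with `lam 0 = 1`. Hence `φ → lam`
pointwise as `M → ∞`, first on `[0, ∞)` and then everywhere by Hermitian symmetry
(`apply_neg_of_posDef`). The existence half of Lévy's continuity theorem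
(`exists_probabilityMeasure_of_tendsto_charFun`) then yields the measure.
-/

open Matrix Complex MeasureTheory
open scoped ComplexOrder

/-- Finite form of Herglotz's theorem. The measure has density
`(2πN)⁻¹ ∑ a (j - l) e^{-ijθ} e^{ilθ}` (sum over `0 ≤ j, l < N`) on `(-π, π]`. This is nonnegative
by positive definiteness, and its `k`-th Fourier coefficient counts the `N - k` pairs with
`j - l = k`. -/
lemma exists_measure_of_discrete (a : ℤ → ℂ) (N : ℕ) (hN : 0 < N) (a0 : a 0 = 1)
    (hpd : ∀ c : Fin N → ℂ, 0 ≤ ∑ j : Fin N, ∑ l : Fin N,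
      a ((j : ℤ) - (l : ℤ)) * c j * star (c l)) :
    ∃ ν : Measure ℝ, IsProbabilityMeasure ν ∧ (∀ᵐ θ ∂ν, |θ| ≤ Real.pi) ∧
      ∀ k : ℕ, k ≤ N → charFun ν (k : ℝ) = (1 - (k : ℂ) / N) * a k := by
  have hNC : (N : ℂ) ≠ 0 := by exact_mod_cast hN.ne'
  have hpi : (Real.pi : ℂ) ≠ 0 := by exact_mod_cast Real.pi_ne_zero
  let P : ℝ → ℂ := fun θ ↦ (2 * Real.pi * N : ℂ)⁻¹ * ∑ j : Fin N, ∑ l : Fin N,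
    a ((j : ℤ) - (l : ℤ)) * cexp (-(I * j * θ)) * star (cexp (-(I * l * θ)))
  have hPcont : Continuous P := by fun_prop
  have hPnonneg (θ : ℝ) : 0 ≤ P θ := by
    refine mul_nonneg ?_ (hpd _)
    rw [show (2 * Real.pi * N : ℂ)⁻¹ = (((2 * Real.pi * N)⁻¹ : ℝ) : ℂ) by push_cast; rfl]
    exact_mod_cast (by positivity : 0 ≤ (2 * Real.pi * N)⁻¹)
  let p : ℝ → ℝ := fun θ ↦ (P θ).re
  have hp (θ : ℝ) : (p θ : ℂ) = P θ := by
    apply Complex.ext <;> simp [p]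
    exact (Complex.le_def.1 (hPnonneg θ)).2
  have hp0 (θ : ℝ) : 0 ≤ p θ := (Complex.le_def.1 (hPnonneg θ)).1
  have hpcont : Continuous p := Complex.continuous_re.comp hPcont
  let S : Measure ℝ := volume.restrict (Set.Ioc (-Real.pi) Real.pi)
  let ν : Measure ℝ := S.withDensity (fun θ ↦ ENNReal.ofReal (p θ))
  have hle : -Real.pi ≤ Real.pi := by linarith [Real.pi_pos]
  -- orthogonality of the characters of the circle
  have horth (m : ℤ) : ∫ θ in (-Real.pi)..Real.pi, cexp (I * m * θ)
      = if m = 0 then (2 * Real.pi : ℂ) else 0 := by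
    split_ifs with hm
    · simp [hm]; ring
    · have hmc : I * (m : ℂ) ≠ 0 := mul_ne_zero I_ne_zero (by exact_mod_cast hm)
      rw [integral_exp_mul_complex hmc]
      have : cexp (I * m * Real.pi) = cexp (I * m * (-Real.pi : ℝ)) := by
        rw [Complex.exp_eq_exp_iff_exists_int]
        exact ⟨m, by push_cast; ring⟩
      rw [this, sub_self, zero_div]
  have hchar (k : ℕ) (hk : k ≤ N) : charFun ν (k : ℝ) = (1 - (k : ℂ) / N) * a k := by
    rw [charFun_apply_real]
    have h1 : ∫ θ, cexp (((k : ℝ) : ℂ) * θ * I) ∂ν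
        = ∫ θ in (-Real.pi)..Real.pi, ∑ j : Fin N, ∑ l : Fin N,
          (2 * Real.pi * N : ℂ)⁻¹ * a ((j : ℤ) - (l : ℤ)) *
            cexp (I * ((k + l - j : ℤ) : ℂ) * θ) := by
      rw [integral_withDensity_eq_integral_toReal_smul (by fun_prop) (by simp),
        intervalIntegral.integral_of_le hle]
      refine integral_congr_ae (ae_of_all _ fun θ ↦ ?_)
      simp only [ENNReal.toReal_ofReal (hp0 θ), Complex.real_smul, hp, P, Finset.mul_sum,
        Finset.sum_mul]
      refine Finset.sum_congr rfl fun j _ ↦ Finset.sum_congr rfl fun l _ ↦ ?_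
      have : star (cexp (-(I * l * θ))) = cexp (I * l * θ) := by
        rw [Complex.star_def, ← Complex.exp_conj]; simp
      rw [this, show I * (((k : ℤ) + l - j : ℤ) : ℂ) * θ
        = -(I * j * θ) + I * l * θ + ((k : ℝ) : ℂ) * θ * I by push_cast; ring,
        Complex.exp_add, Complex.exp_add]
      ring
    have h3 (j : Fin N) : ∫ θ in (-Real.pi)..Real.pi, ∑ l : Fin N,
          (2 * Real.pi * N : ℂ)⁻¹ * a ((j : ℤ) - (l : ℤ)) *
            cexp (I * ((k + l - j : ℤ) : ℂ) * θ)
        = ∑ l : Fin N, (2 * Real.pi * N : ℂ)⁻¹ * a ((j : ℤ) - (l : ℤ)) *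
          (if (k : ℤ) + l - j = 0 then (2 * Real.pi : ℂ) else 0) := by
      rw [intervalIntegral.integral_finsetSum
        (fun l _ ↦ Continuous.intervalIntegrable (by fun_prop) _ _)]
      simp_rw [intervalIntegral.integral_const_mul, horth]
    rw [h1, intervalIntegral.integral_finsetSum
      (fun j _ ↦ Continuous.intervalIntegrable (by fun_prop) _ _)]
    simp_rw [h3]
    rw [Finset.sum_comm]
    have h2 (l : Fin N) : (∑ j : Fin N, (2 * Real.pi * N : ℂ)⁻¹ * a ((j : ℤ) - (l : ℤ)) *
        (if (k : ℤ) + l - j = 0 then (2 * Real.pi : ℂ) else 0))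
        = if (l : ℕ) < N - k then (N : ℂ)⁻¹ * a k else 0 := by
      split_ifs with hl
      · rw [Finset.sum_eq_single (⟨l + k, by omega⟩ : Fin N)]
        · rw [if_pos (by simp; ring)]
          simp only [Nat.cast_add, add_sub_cancel_left]
          field_simp
        · intro j _ hj
          rw [if_neg, mul_zero]
          intro h
          apply hj
          ext
          simp only
          omega
        · simp
      · refine Finset.sum_eq_zero fun j _ ↦ ?_
        rw [if_neg (by omega), mul_zero]
    simp_rw [h2]
    rw [Fin.sum_univ_eq_sum_range (fun l ↦ if l < N - k then (N : ℂ)⁻¹ * a k else 0) N,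
      ← Finset.sum_filter, Finset.sum_const,
      show Finset.filter (fun l ↦ l < N - k) (Finset.range N) = Finset.range (N - k) by
        ext; simp; omega, Finset.card_range, nsmul_eq_mul, Nat.cast_sub hk]
    field_simp
  have hac : ∀ᵐ θ ∂ν, |θ| ≤ Real.pi := by
    refine (withDensity_absolutelyContinuous S _).ae_le ?_
    filter_upwards [ae_restrict_mem measurableSet_Ioc] with θ hθ
    exact abs_le.2 ⟨hθ.1.le, hθ.2⟩
  refine ⟨ν, ?_, hac, hchar⟩
  have h := hchar 0 (Nat.zero_le _)
  have : IsFiniteMeasure ν := isFiniteMeasure_withDensity_ofReal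
    ((hpcont.integrableOn_Icc (a := -Real.pi) (b := Real.pi)).mono_set
      Set.Ioc_subset_Icc_self).2
  -- the coefficient at `k = 0` is the total mass
  simp [a0] at h
  exact ⟨by rwa [measureReal_def, ENNReal.toReal_eq_one_iff] at h⟩

/-- Modulus of continuity of the characteristic function of a measure on `[-π, π]`, over steps
`r ∈ [0, 1]`. By Cauchy-Schwarz the left side is at most `∫ |e^{irθ} - 1|² = ∫ 2 (1 - cos rθ)`, and
`cos rθ ≥ cos θ` because cosine is decreasing on `[0, π]`. -/
lemma norm_charFun_sub_sq_le (ν : Measure ℝ) [IsProbabilityMeasure ν]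
    (hν : ∀ᵐ θ ∂ν, |θ| ≤ Real.pi) (s r : ℝ) (hr0 : 0 ≤ r) (hr1 : r ≤ 1) :
    ‖charFun ν (s + r) - charFun ν s‖ ^ 2 ≤ 2 * (1 - (charFun ν 1).re) := by
  have hint (t : ℝ) : Integrable (fun θ : ℝ ↦ cexp (t * θ * I)) ν :=
    Integrable.of_bound (by fun_prop) 1 (ae_of_all _ fun θ ↦ by
      rw [← Complex.ofReal_mul, Complex.norm_exp_ofReal_mul_I])
  let f : ℝ → ℝ := fun θ ↦ ‖cexp (r * θ * I) - 1‖
  have hf2 (θ : ℝ) : f θ ^ 2 = 2 * (1 - Real.cos (r * θ)) := by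
    simp only [f]
    rw [← Complex.ofReal_mul, ← Complex.normSq_eq_norm_sq, Complex.normSq_apply]
    simp only [Complex.sub_re, Complex.sub_im, Complex.exp_ofReal_mul_I_re,
      Complex.exp_ofReal_mul_I_im, Complex.one_re, Complex.one_im]
    nlinarith [Real.sin_sq_add_cos_sq (r * θ)]
  have hfm : MemLp f 2 ν := by
    refine MemLp.of_bound (by fun_prop) 2 (ae_of_all _ fun θ ↦ ?_)
    simp only [f, norm_norm]
    refine (norm_sub_le _ _).trans ?_
    rw [← Complex.ofReal_mul, Complex.norm_exp_ofReal_mul_I]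
    norm_num
  have h1 : ‖charFun ν (s + r) - charFun ν s‖ ≤ ∫ θ, f θ ∂ν := by
    rw [charFun_apply_real, charFun_apply_real, ← integral_sub (hint _) (hint _)]
    refine (norm_integral_le_integral_norm _).trans_eq (integral_congr_ae (ae_of_all _ fun θ ↦ ?_))
    simp only [f]
    rw [show ((s + r : ℝ) : ℂ) * θ * I = s * θ * I + r * θ * I by push_cast; ring, Complex.exp_add,
      ← mul_sub_one, norm_mul, ← Complex.ofReal_mul, Complex.norm_exp_ofReal_mul_I, one_mul]
  -- Cauchy-Schwarz for a probability measure is the nonnegativity of the variance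
  have h2 : (∫ θ, f θ ∂ν) ^ 2 ≤ ∫ θ, f θ ^ 2 ∂ν := by
    have := ProbabilityTheory.variance_nonneg f ν
    rw [ProbabilityTheory.variance_eq_sub hfm] at this
    simpa using this
  have hcosint : Integrable Real.cos ν :=
    Integrable.of_bound (by fun_prop) 1 (ae_of_all _ fun θ ↦ Real.abs_cos_le_one θ)
  have h3 : ∫ θ, f θ ^ 2 ∂ν ≤ ∫ θ, 2 * (1 - Real.cos θ) ∂ν := by
    refine integral_mono_ae hfm.integrable_sq (((integrable_const 1).sub hcosint).const_mul 2) ?_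
    filter_upwards [hν] with θ hθ
    simp only [hf2]
    have : Real.cos θ ≤ Real.cos (r * θ) := by
      rw [← Real.cos_abs θ, ← Real.cos_abs (r * θ), abs_mul, abs_of_nonneg hr0]
      exact Real.cos_le_cos_of_nonneg_of_le_pi (by positivity) hθ
        (mul_le_of_le_one_left (abs_nonneg _) hr1)
    linarith
  have h4 : ∫ θ, 2 * (1 - Real.cos θ) ∂ν = 2 * (1 - (charFun ν 1).re) := by
    have hre : (charFun ν 1).re = ∫ θ, Real.cos θ ∂ν := by
      rw [charFun_apply_real]
      have := integral_re (hint 1)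
      simp only [RCLike.re_eq_complex_re] at this
      rw [← this]
      simp [Complex.exp_ofReal_mul_I_re]
    rw [integral_const_mul, integral_sub (integrable_const 1) hcosint, hre]
    simp
  calc _ ≤ (∫ θ, f θ ∂ν) ^ 2 := by gcongr
    _ ≤ _ := h2.trans (h3.trans_eq h4)

open Filter Topology in
/-- Lévy's continuity theorem, in the form that produces the limit measure: the sequence is tight,
so by Prokhorov's theorem it has a limit point, whose characteristic function must be `f`. -/
lemma exists_probabilityMeasure_of_tendsto_charFun (μ : ℕ → ProbabilityMeasure ℝ) (f : ℝ → ℂ)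
    (hf : ContinuousAt f 0)
    (h : ∀ t, Tendsto (fun n ↦ charFun (μ n : Measure ℝ) t) atTop (𝓝 (f t))) :
    ∃ μ' : ProbabilityMeasure ℝ, ∀ t, charFun (μ' : Measure ℝ) t = f t := by
  have htight : IsTightMeasureSet (Set.range fun n ↦ (μ n : Measure ℝ)) :=
    isTightMeasureSet_of_tendsto_charFun hf h
  have hcomp : IsCompact (closure (Set.range μ)) :=
    isCompact_closure_of_isTightMeasureSet (by
      convert htight using 1
      ext; simp)
  obtain ⟨μ', -, hμ'⟩ := hcomp.ultrafilter_le_nhds ((hyperfilter ℕ).map μ)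
    (.trans (by simp) (monotone_principal subset_closure))
  refine ⟨μ', fun t ↦ tendsto_nhds_unique ?_ ((h t).mono_left Nat.hyperfilter_le_atTop)⟩
  have hμ'' : Tendsto μ (hyperfilter ℕ : Filter ℕ) (𝓝 μ') := hμ'
  rw [ProbabilityMeasure.tendsto_iff_forall_integral_rclike_tendsto ℂ] at hμ''
  simp_rw [charFun_eq_integral_innerProbChar]
  exact hμ'' (BoundedContinuousFunction.innerProbChar t)

/-- A positive definite function is Hermitian: test on the points `0, t` with coefficients `(1, 1)`
and `(1, i)`. -/
lemma apply_neg_of_posDef (lam : ℝ → ℂ)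
    (hpd : ∀ (K : ℕ) (x : Fin K → ℝ) (c : Fin K → ℂ),
      0 ≤ ∑ j, ∑ l, lam (x j - x l) * c j * star (c l))
    (h0 : lam 0 = 1) (t : ℝ) : lam (-t) = star (lam t) := by
  have h1 := (Complex.le_def.1 (hpd 2 ![0, t] ![1, 1])).2
  have h2 := (Complex.le_def.1 (hpd 2 ![0, t] ![1, I])).2
  simp [Fin.sum_univ_two, h0] at h1 h2
  apply Complex.ext <;> simp <;> linarith

open Filter Topology in
theorem bochner_real (lam : ℝ → ℂ) (hcont : Continuous lam)
    (hpd : ∀ (K : ℕ) (x : Fin K → ℝ) (c : Fin K → ℂ),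
      0 ≤ ∑ j, ∑ l, lam (x j - x l) * c j * star (c l))
    (h0 : lam 0 = 1) :
    ∃ μ : Measure ℝ, IsProbabilityMeasure μ ∧
      ∀ x : ℝ, lam x = ∫ y : ℝ, Complex.exp (Complex.I * x * y) ∂μ := by
  -- mesh `1/(n+1)` with `(n+1)²` points: the mesh tends to `0`, while the range `n+1` of the grid
  -- tends to infinity, so that `1 - k/(n+1)²` tends to `1` along `k/(n+1) → t`
  have key (n : ℕ) := exists_measure_of_discrete (fun m : ℤ ↦ lam (m / (n + 1 : ℝ)))
    ((n + 1) ^ 2) (by positivity) (by simp [h0]) (fun c ↦ by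
      have := hpd _ (fun j : Fin ((n + 1) ^ 2) ↦ (j : ℝ) / (n + 1)) c
      simpa [sub_div] using this)
  choose ν hν hsupp hchar using key
  have hinv : Tendsto (fun n : ℕ ↦ (1 : ℝ) / (n + 1)) atTop (𝓝 0) :=
    tendsto_one_div_add_atTop_nhds_zero_nat
  have hinvC : Tendsto (fun n : ℕ ↦ (((1 : ℝ) / (n + 1) : ℝ) : ℂ)) atTop (𝓝 0) := by
    exact (Complex.continuous_ofReal.tendsto 0).comp hinv
  have hone : Tendsto (fun n ↦ charFun (ν n) 1) atTop (𝓝 1) := by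
    have h1 : Tendsto (fun n : ℕ ↦ (1 - (((1 : ℝ) / (n + 1) : ℝ) : ℂ) ^ 2) *
        lam ((1 : ℝ) / (n + 1))) atTop (𝓝 1) := by
      simpa [h0] using ((tendsto_const_nhds (x := (1 : ℂ))).sub (hinvC.pow 2)).mul
        ((hcont.tendsto 0).comp hinv)
    refine h1.congr fun n ↦ ?_
    have := hchar n 1 (Nat.one_le_pow _ _ (by omega))
    simp only [Nat.cast_one, Int.cast_one] at this
    rw [this]
    push_cast
    rw [div_pow, one_pow]
  have hpos (t : ℝ) (ht : 0 ≤ t) :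
      Tendsto (fun n : ℕ ↦ charFun (ν n) ((n + 1) * t)) atTop (𝓝 (lam t)) := by
    have hfl : Tendsto (fun n : ℕ ↦ (⌊t * (n + 1 : ℝ)⌋₊ : ℝ) / (n + 1)) atTop (𝓝 t) := by
      have h := (tendsto_nat_floor_mul_div_atTop (R := ℝ) ht).comp
        (tendsto_atTop_add_const_right atTop (1 : ℝ) tendsto_natCast_atTop_atTop)
      exact h
    have hflC := (Complex.continuous_ofReal.tendsto t).comp hfl
    have hgrid : Tendsto (fun n : ℕ ↦ charFun (ν n) (⌊t * (n + 1 : ℝ)⌋₊ : ℝ)) atTop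
        (𝓝 (lam t)) := by
      have h1 : Tendsto (fun n : ℕ ↦ (1 - (((⌊t * (n + 1 : ℝ)⌋₊ : ℝ) / (n + 1) : ℝ) : ℂ) *
          (((1 : ℝ) / (n + 1) : ℝ) : ℂ)) * lam ((⌊t * (n + 1 : ℝ)⌋₊ : ℝ) / (n + 1))) atTop
          (𝓝 (lam t)) := by
        simpa using ((tendsto_const_nhds (x := (1 : ℂ))).sub (hflC.mul hinvC)).mul
          ((hcont.tendsto t).comp hfl)
      refine h1.congr' ?_
      filter_upwards [eventually_ge_atTop ⌈t⌉₊] with n hn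
      have htn : t ≤ n := Nat.ceil_le.1 hn
      have hle : ⌊t * (n + 1 : ℝ)⌋₊ ≤ (n + 1) ^ 2 := by
        refine Nat.floor_le_of_le ?_
        push_cast
        nlinarith
      have := hchar n _ hle
      rw [this]
      push_cast
      congr 2
      field_simp
    -- passing from the grid point `⌊t(n+1)⌋` to `t(n+1)` costs at most `√(2(1 - Re φ(1)))`
    have hdiff : Tendsto (fun n : ℕ ↦ charFun (ν n) ((n + 1) * t) -
        charFun (ν n) (⌊t * (n + 1 : ℝ)⌋₊ : ℝ)) atTop (𝓝 0) := by
      have hb : Tendsto (fun n ↦ √(2 * (1 - (charFun (ν n) 1).re))) atTop (𝓝 0) := by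
        have := ((((Complex.continuous_re.tendsto 1).comp hone).const_sub 1).const_mul 2).sqrt
        simpa using this
      refine squeeze_zero_norm (fun n ↦ ?_) hb
      refine Real.le_sqrt_of_sq_le ?_
      have hn : 0 ≤ t * (n + 1 : ℝ) := by positivity
      have := norm_charFun_sub_sq_le (ν n) (hsupp n) (⌊t * (n + 1 : ℝ)⌋₊ : ℝ)
        (t * (n + 1) - ⌊t * (n + 1 : ℝ)⌋₊) (sub_nonneg.2 (Nat.floor_le hn))
        (by linarith [Nat.lt_floor_add_one (t * (n + 1 : ℝ))])
      rw [add_sub_cancel] at this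
      rwa [mul_comm ((n : ℝ) + 1) t]
    simpa using hdiff.add hgrid
  have hall (t : ℝ) : Tendsto (fun n : ℕ ↦ charFun (ν n) ((n + 1) * t)) atTop (𝓝 (lam t)) := by
    rcases le_total 0 t with ht | ht
    · exact hpos t ht
    · have h := (Complex.continuous_conj.tendsto _).comp (hpos (-t) (by linarith))
      have h' := apply_neg_of_posDef lam hpd h0 (-t)
      rw [neg_neg] at h'
      rw [h']
      refine h.congr fun n ↦ ?_
      simp [← charFun_neg]
  obtain ⟨μ, hμ⟩ := exists_probabilityMeasure_of_tendsto_charFun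
    (fun n ↦ ⟨(ν n).map (((n : ℝ) + 1) * ·), Measure.isProbabilityMeasure_map (by fun_prop)⟩)
    lam hcont.continuousAt (fun t ↦ by simpa [charFun_map_mul] using hall t)
  refine ⟨μ, inferInstance, fun x ↦ ?_⟩
  rw [← hμ x, charFun_apply_real]
  congr with y
  congr 1
  ring
end

section
/- Let ρ and σ be density matrices on a finite-dimensional Hilbert space with supp ρ ⊆ supp σ, and let Φ be a quantum channel (CPTP map). Then Tr(Φ(ρ)(−log Φ(σ))) ≤ S(Φ(ρ)) − S(ρ) + Tr(ρ(−log σ)), where S is the von Neumann entropy. -/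
/-!
The proof follows the relative modular operator approach, phrased through a variational formula.

Let `p`, `q` be the eigenvalues of `ρ`, `σ` and `w i j` the squared overlaps of the eigenvectors.
The function `F(t) = ∑ w p log (q + t p)` satisfies `F(0) = Tr(ρ log σ)` and
`F(t) − log t → −S(ρ)` as `t → ∞`, so the relative entropy is the total increase of `F`
with `log t` subtracted. Its derivative `∑ w p² / (q + t p)` equals
`⟨ρ, (L_σ + t R_ρ)⁻¹ ρ⟩`, the maximum over matrices `X` of
`2 Re Tr(X* ρ) − Tr(X* σ X) − t Tr(X ρ X*)` (`exists_interpolation`).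

This maximum decreases under a channel: replacing `X` by `Φ*(X)` keeps the linear term and, by the
Kadison–Schwarz inequality for the unital map `Φ*` (`dual_schwarz`), does not increase the two
subtracted quadratic terms (`quadFun_dual_le`). Hence if `G` is the function attached to `Φ(ρ)`,
`Φ(σ)`, then `F − G` is nondecreasing on `[0, ∞)`, and comparing its value at `0` with its limit
at infinity gives the inequality. The inclusion of supports makes `F` differentiable at `0`
despite the convention `log 0 = 0`; it is inherited by the images under `Φ` (`channel_supp`).
-/



open Matrix Complex
open scoped ComplexOrder

/-- The matrix logarithm of a Hermitian matrix via the spectral theorem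
(with the convention `log 0 = 0` on the kernel, and junk value `0` off
the Hermitian matrices). -/
noncomputable def mlog {n : Type*} [Fintype n] [DecidableEq n] (A : Matrix n n ℂ) :
    Matrix n n ℂ :=
  if h : A.IsHermitian then
    (h.eigenvectorUnitary : Matrix n n ℂ) *
      Matrix.diagonal (fun i => (Real.log (h.eigenvalues i) : ℂ)) *
      (star (h.eigenvectorUnitary : Matrix n n ℂ))
  else 0

/-- The von Neumann entropy `S(ρ) = -Tr(ρ log ρ) = -Σ λ_i log λ_i` (natural log,
with the convention `0 log 0 = 0`, and junk value `0` off the Hermitian matrices). -/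
noncomputable def vnEntropy {n : Type*} [Fintype n] [DecidableEq n] (A : Matrix n n ℂ) : ℝ :=
  if h : A.IsHermitian then -∑ i, h.eigenvalues i * Real.log (h.eigenvalues i) else 0

/-- A density matrix: positive semidefinite with unit trace. -/
def IsDensityMatrix {n : Type*} [Fintype n] [DecidableEq n] (ρ : Matrix n n ℂ) : Prop :=
  ρ.PosSemidef ∧ ρ.trace = 1

/-- A quantum channel: a map admitting a Kraus representation `Σ V_j ρ V_j^*`
with `Σ V_j^* V_j = 1` (completely positive and trace preserving). -/
def IsCPTP {n : Type*} [Fintype n] [DecidableEq n]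
    (Φ : Matrix n n ℂ → Matrix n n ℂ) : Prop :=
  ∃ (r : ℕ) (V : Fin r → Matrix n n ℂ),
    (∀ ρ, Φ ρ = ∑ j, V j * ρ * (V j)ᴴ) ∧ ∑ j, (V j)ᴴ * V j = 1

/-- The concave quadratic functional
`2 Re Tr(X* ρ) − Tr(X* σ X) − t Tr(X ρ X*)`, whose maximum over `X` is
`⟨ρ, (L_σ + t R_ρ)⁻¹ ρ⟩` in the Hilbert–Schmidt inner product, where `L_σ` and `R_ρ` are left
and right multiplication. -/
noncomputable def quadFun {n : Type*} [Fintype n] (ρ σ : Matrix n n ℂ) (t : ℝ)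
    (X : Matrix n n ℂ) : ℝ :=
  2 * (Xᴴ * ρ).trace.re - (Xᴴ * σ * X).trace.re - t * (X * ρ * Xᴴ).trace.re

/-- Kadison–Schwarz for the unital dual map `Φ*(X) = ∑ Vⱼ* X Vⱼ`, paired with `σ ≥ 0`. It holds
since `Φ*(X X*) − Φ*(X) Φ*(X)* = ∑ Mⱼ Mⱼ*` with `Mⱼ = Vⱼ* X − Φ*(X) Vⱼ*`. -/
lemma dual_schwarz {n : Type*} [Fintype n] [DecidableEq n] {r : ℕ} (V : Fin r → Matrix n n ℂ)
    (hV : ∑ j, (V j)ᴴ * V j = 1) {σ : Matrix n n ℂ} (hσ : σ.PosSemidef) (X : Matrix n n ℂ) :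
    ((∑ j, (V j)ᴴ * X * V j)ᴴ * σ * (∑ j, (V j)ᴴ * X * V j)).trace.re
      ≤ (Xᴴ * (∑ j, V j * σ * (V j)ᴴ) * X).trace.re := by
  set Y := ∑ j, (V j)ᴴ * X * V j with hY
  have hYs : Yᴴ = ∑ j, (V j)ᴴ * Xᴴ * V j := by
    simp [hY, conjTranspose_sum, conjTranspose_mul, Matrix.mul_assoc]
  have key : ∑ j, ((V j)ᴴ * X - Y * (V j)ᴴ) * ((V j)ᴴ * X - Y * (V j)ᴴ)ᴴ
      = (∑ j, (V j)ᴴ * X * Xᴴ * V j) - Y * Yᴴ := by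
    have h1 : ∀ j, ((V j)ᴴ * X - Y * (V j)ᴴ) * ((V j)ᴴ * X - Y * (V j)ᴴ)ᴴ
        = (V j)ᴴ * X * Xᴴ * V j - ((V j)ᴴ * X * V j) * Yᴴ - Y * ((V j)ᴴ * Xᴴ * V j)
          + Y * ((V j)ᴴ * V j) * Yᴴ := by
      intro j
      simp only [conjTranspose_sub, conjTranspose_mul, conjTranspose_conjTranspose,
        Matrix.mul_sub, Matrix.sub_mul, Matrix.mul_assoc]
      abel
    simp only [h1, Finset.sum_add_distrib, Finset.sum_sub_distrib, ← Finset.sum_mul,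
      ← Finset.mul_sum]
    rw [hV, ← hYs, ← hY]
    simp
  have hpos : 0 ≤ (σ * ∑ j, ((V j)ᴴ * X - Y * (V j)ᴴ) * ((V j)ᴴ * X - Y * (V j)ᴴ)ᴴ).trace.re := by
    rw [Finset.mul_sum, trace_sum, Complex.re_sum]
    refine Finset.sum_nonneg fun j _ => ?_
    have := (hσ.conjTranspose_mul_mul_same ((V j)ᴴ * X - Y * (V j)ᴴ)).trace_nonneg
    rw [← Matrix.mul_assoc, trace_mul_comm, ← Matrix.mul_assoc]
    exact (Complex.le_def.mp this).1
  rw [key, Matrix.mul_sub, trace_sub, Complex.sub_re] at hpos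
  have e1 : (Yᴴ * σ * Y).trace = (σ * (Y * Yᴴ)).trace := by
    rw [Matrix.mul_assoc, trace_mul_comm, Matrix.mul_assoc]
  have e2 : (Xᴴ * (∑ j, V j * σ * (V j)ᴴ) * X).trace
      = (σ * ∑ j, (V j)ᴴ * X * Xᴴ * V j).trace := by
    simp only [Finset.mul_sum, Finset.sum_mul, trace_sum]
    refine Finset.sum_congr rfl fun j _ => ?_
    rw [show Xᴴ * (V j * σ * (V j)ᴴ) * X = (Xᴴ * V j) * (σ * ((V j)ᴴ * X)) by
      simp only [Matrix.mul_assoc], trace_mul_comm]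
    simp only [Matrix.mul_assoc]
  rw [e1, e2]
  linarith

/-- Passing from `X` to `Φ*(X)` can only increase the quadratic functional. -/
lemma quadFun_dual_le {n : Type*} [Fintype n] [DecidableEq n] {r : ℕ} (V : Fin r → Matrix n n ℂ)
    (hV : ∑ j, (V j)ᴴ * V j = 1) {ρ σ : Matrix n n ℂ} (hρ : ρ.PosSemidef) (hσ : σ.PosSemidef)
    {t : ℝ} (ht : 0 ≤ t) (X : Matrix n n ℂ) :
    quadFun (∑ j, V j * ρ * (V j)ᴴ) (∑ j, V j * σ * (V j)ᴴ) t X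
      ≤ quadFun ρ σ t (∑ j, (V j)ᴴ * X * V j) := by
  have h1 := dual_schwarz V hV hσ X
  have h2 := dual_schwarz V hV hρ Xᴴ
  have hYs : (∑ j, (V j)ᴴ * Xᴴ * V j) = (∑ j, (V j)ᴴ * X * V j)ᴴ := by
    simp [conjTranspose_sum, conjTranspose_mul, Matrix.mul_assoc]
  have h3 : ((∑ j, (V j)ᴴ * X * V j)ᴴ * ρ).trace = (Xᴴ * ∑ j, V j * ρ * (V j)ᴴ).trace := by
    rw [← hYs]
    simp only [Finset.mul_sum, Finset.sum_mul, trace_sum]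
    refine Finset.sum_congr rfl fun j _ => ?_
    rw [show (V j)ᴴ * Xᴴ * V j * ρ = (V j)ᴴ * (Xᴴ * V j * ρ) by
      simp only [Matrix.mul_assoc], trace_mul_comm]
    simp only [Matrix.mul_assoc]
  rw [hYs] at h2
  simp only [conjTranspose_conjTranspose] at h2
  unfold quadFun
  rw [h3]
  have := mul_le_mul_of_nonneg_left h2 ht
  linarith

/-- One matrix entry of the maximisation of `quadFun`. Division by zero is harmless: `q + t p`
vanishes only together with `p`. -/
lemma entry_le (p q t : ℝ) (hp : 0 ≤ p) (hq : 0 ≤ q) (ht : 0 < t) (z c : ℂ) :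
    2 * (star z * c * p).re - q * ‖z‖ ^ 2 - t * (p * ‖z‖ ^ 2)
      ≤ ‖c‖ ^ 2 * p * (p / (q + t * p)) := by
  have e1 : (star z * c * p).re = p * (z.re * c.re + z.im * c.im) := by
    simp [Complex.mul_re]; ring
  have nz : ‖z‖ ^ 2 = z.re ^ 2 + z.im ^ 2 := by
    rw [← Complex.normSq_eq_norm_sq, Complex.normSq_apply]; ring
  have nc : ‖c‖ ^ 2 = c.re ^ 2 + c.im ^ 2 := by
    rw [← Complex.normSq_eq_norm_sq, Complex.normSq_apply]; ring
  rw [e1, nz, nc]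
  rcases hp.eq_or_lt with rfl | hp'
  · simp; positivity
  · have hs : 0 < q + t * p := by positivity
    rw [← mul_div_assoc, le_div_iff₀ hs]
    nlinarith [sq_nonneg ((q + t * p) * z.re - p * c.re), sq_nonneg ((q + t * p) * z.im - p * c.im)]

lemma entry_eq (p q t : ℝ) (hp : 0 ≤ p) (hq : 0 ≤ q) (ht : 0 < t) (c : ℂ) (z : ℂ)
    (hz : z = ((p / (q + t * p) : ℝ) : ℂ) * c) :
    2 * (star z * c * p).re - q * ‖z‖ ^ 2 - t * (p * ‖z‖ ^ 2)
      = ‖c‖ ^ 2 * p * (p / (q + t * p)) := by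
  have e1 : (star z * c * p).re = p * (z.re * c.re + z.im * c.im) := by
    simp [Complex.mul_re]; ring
  have nz : ‖z‖ ^ 2 = z.re ^ 2 + z.im ^ 2 := by
    rw [← Complex.normSq_eq_norm_sq, Complex.normSq_apply]; ring
  have nc : ‖c‖ ^ 2 = c.re ^ 2 + c.im ^ 2 := by
    rw [← Complex.normSq_eq_norm_sq, Complex.normSq_apply]; ring
  have zr : z.re = p / (q + t * p) * c.re := by rw [hz, Complex.re_ofReal_mul]
  have zi : z.im = p / (q + t * p) * c.im := by rw [hz, Complex.im_ofReal_mul]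
  rw [e1, nz, nc, zr, zi]
  rcases hp.eq_or_lt with rfl | hp'
  · simp
  · have hs : q + t * p ≠ 0 := by positivity
    field_simp
    ring

/-- `quadFun` in the eigenbases of `ρ` and `σ`, with `X = W Z U*`. -/
lemma quadFun_eigen {n : Type*} [Fintype n] [DecidableEq n] (U W : Matrix n n ℂ) (p q : n → ℝ)
    (hU : star U * U = 1) (hW : star W * W = 1) (t : ℝ) (Z : Matrix n n ℂ) :
    quadFun (U * diagonal (fun i => (p i : ℂ)) * star U)
        (W * diagonal (fun i => (q i : ℂ)) * star W) t (W * Z * star U)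
      = ∑ j, ∑ i, (2 * (star (Z j i) * (star W * U) j i * p i).re - q j * ‖Z j i‖ ^ 2
          - t * (p i * ‖Z j i‖ ^ 2)) := by
  simp only [star_eq_conjTranspose] at *
  have a1 : ((W * Z * Uᴴ)ᴴ * (U * diagonal (fun i => (p i : ℂ)) * Uᴴ)).trace
      = ∑ j, ∑ i, star (Z j i) * (Wᴴ * U) j i * p i := by
    have : (W * Z * Uᴴ)ᴴ * (U * diagonal (fun i => (p i : ℂ)) * Uᴴ)
        = U * (Zᴴ * (Wᴴ * U * diagonal (fun i => (p i : ℂ))) * Uᴴ) := by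
      simp only [conjTranspose_mul, conjTranspose_conjTranspose, Matrix.mul_assoc]
    rw [this, trace_mul_comm, Matrix.mul_assoc _ Uᴴ, hU, Matrix.mul_one, Finset.sum_comm]
    simp only [trace, diag_apply, Matrix.mul_apply (M := Zᴴ), mul_diagonal, conjTranspose_apply]
    refine Finset.sum_congr rfl fun i _ => Finset.sum_congr rfl fun j _ => ?_
    ring
  have nrm : ∀ z : ℂ, star z * z = ((‖z‖ ^ 2 : ℝ) : ℂ) := by
    intro z
    rw [← Complex.normSq_eq_norm_sq, Complex.normSq_eq_conj_mul_self]; rfl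
  have a2 : ((W * Z * Uᴴ)ᴴ * (W * diagonal (fun i => (q i : ℂ)) * Wᴴ) * (W * Z * Uᴴ)).trace
      = ∑ j, ∑ i, ((q j * ‖Z j i‖ ^ 2 : ℝ) : ℂ) := by
    have : (W * Z * Uᴴ)ᴴ * (W * diagonal (fun i => (q i : ℂ)) * Wᴴ) * (W * Z * Uᴴ)
        = U * (Zᴴ * ((Wᴴ * W) * (diagonal (fun i => (q i : ℂ)) * ((Wᴴ * W) * Z))) * Uᴴ) := by
      simp only [conjTranspose_mul, conjTranspose_conjTranspose, Matrix.mul_assoc]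
    rw [this, trace_mul_comm, Matrix.mul_assoc _ Uᴴ, hU, hW, Matrix.mul_one, Matrix.one_mul,
      Matrix.one_mul, Finset.sum_comm]
    simp only [trace, diag_apply, Matrix.mul_apply (M := Zᴴ), diagonal_mul, conjTranspose_apply]
    refine Finset.sum_congr rfl fun i _ => Finset.sum_congr rfl fun j _ => ?_
    rw [mul_left_comm, nrm]; push_cast; ring
  have a3 : ((W * Z * Uᴴ) * (U * diagonal (fun i => (p i : ℂ)) * Uᴴ) * (W * Z * Uᴴ)ᴴ).trace
      = ∑ j, ∑ i, ((p i * ‖Z j i‖ ^ 2 : ℝ) : ℂ) := by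
    have : (W * Z * Uᴴ) * (U * diagonal (fun i => (p i : ℂ)) * Uᴴ) * (W * Z * Uᴴ)ᴴ
        = W * (Z * ((Uᴴ * U) * (diagonal (fun i => (p i : ℂ)) * ((Uᴴ * U) * Zᴴ))) * Wᴴ) := by
      simp only [conjTranspose_mul, conjTranspose_conjTranspose, Matrix.mul_assoc]
    rw [this, trace_mul_comm, Matrix.mul_assoc _ Wᴴ, hU, hW, Matrix.mul_one, Matrix.one_mul,
      Matrix.one_mul]
    simp only [trace, diag_apply, Matrix.mul_apply (M := Z), diagonal_mul, conjTranspose_apply]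
    refine Finset.sum_congr rfl fun j _ => Finset.sum_congr rfl fun i _ => ?_
    rw [mul_left_comm, mul_comm (Z j i), nrm]; push_cast; ring
  unfold quadFun
  rw [a1, a2, a3]
  simp only [Complex.re_sum, Complex.ofReal_re, Finset.mul_sum, ← Finset.sum_sub_distrib]

/-- With `p`, `q` the eigenvalues of `ρ`, `σ` and `w` the squared overlaps of their eigenvectors,
`F(t) = ∑ w p log (q + t p)` interpolates between `Tr(ρ log σ)` at `t = 0` and, up to `log t`,
`−S(ρ)` at infinity, while `F'(t)` is the maximum of `quadFun ρ σ t`. -/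
lemma exists_interpolation {n : Type*} [Fintype n] [DecidableEq n] (ρ σ : Matrix n n ℂ)
    (hρ : IsDensityMatrix ρ) (hσ : σ.PosSemidef)
    (hsupp : ∀ v : n → ℂ, σ.mulVec v = 0 → ρ.mulVec v = 0) :
    ∃ F f : ℝ → ℝ, (∀ t, 0 ≤ t → HasDerivAt F (f t) t) ∧
      (∀ t, 0 < t → ∀ X, quadFun ρ σ t X ≤ f t) ∧
      (∀ t, 0 < t → ∃ X, quadFun ρ σ t X = f t) ∧
      F 0 = (ρ * mlog σ).trace.re ∧
      Filter.Tendsto (fun t => F t - Real.log t) Filter.atTop (nhds (-vnEntropy ρ)) := by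
  have hρh := hρ.1.isHermitian
  have hσh := hσ.isHermitian
  set p := hρh.eigenvalues with hp
  set q := hσh.eigenvalues with hq
  set U : Matrix n n ℂ := (hρh.eigenvectorUnitary : Matrix n n ℂ) with hUdef
  set W : Matrix n n ℂ := (hσh.eigenvectorUnitary : Matrix n n ℂ) with hWdef
  have hU : star U * U = 1 := Unitary.coe_star_mul_self _
  have hU' : U * star U = 1 := Unitary.coe_mul_star_self _
  have hW : star W * W = 1 := Unitary.coe_star_mul_self _
  have hW' : W * star W = 1 := Unitary.coe_mul_star_self _
  have hp0 : ∀ i, 0 ≤ p i := hρ.1.eigenvalues_nonneg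
  have hq0 : ∀ i, 0 ≤ q i := hσ.eigenvalues_nonneg
  have eρ : ρ = U * diagonal (fun i => (p i : ℂ)) * star U := by
    have := hρh.spectral_theorem
    rw [Unitary.conjStarAlgAut_apply] at this
    exact this
  have eσ : σ = W * diagonal (fun i => (q i : ℂ)) * star W := by
    have := hσh.spectral_theorem
    rw [Unitary.conjStarAlgAut_apply] at this
    exact this
  set C := star W * U with hC
  have hCC : star C * C = 1 := by
    rw [hC, star_mul, star_star, Matrix.mul_assoc, ← Matrix.mul_assoc W, hW', Matrix.one_mul, hU]
  have nrm : ∀ z : ℂ, star z * z = ((‖z‖ ^ 2 : ℝ) : ℂ) := by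
    intro z
    rw [← Complex.normSq_eq_norm_sq, Complex.normSq_eq_conj_mul_self]; rfl
  have hw1 : ∀ i, ∑ j, ‖C j i‖ ^ 2 = 1 := by
    intro i
    have := congrFun (congrFun hCC i) i
    simp only [Matrix.mul_apply, star_apply, Matrix.one_apply_eq, nrm] at this
    exact_mod_cast this
  have hpsum : ∑ i, p i = 1 := by
    have := hρh.trace_eq_sum_eigenvalues
    rw [hρ.2] at this
    apply Complex.ofReal_injective
    push_cast
    exact this.symm
  -- the support condition kills the overlaps with the kernel of `σ`
  have hker : ∀ j i, q j = 0 → ‖C j i‖ ^ 2 * p i = 0 := by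
    intro j i hj
    have h1 : σ.mulVec (W.col j) = 0 := by
      have hs : σ * W = W * diagonal (fun i => (q i : ℂ)) := by
        rw [eσ, Matrix.mul_assoc, hW, Matrix.mul_one]
      ext k
      have h2 := congrFun (congrFun hs k) j
      rw [Matrix.mul_diagonal, hj] at h2
      simpa [Matrix.mul_apply, mulVec, dotProduct] using h2
    have h3 := hsupp _ h1
    have h4 : (diagonal (fun i => (p i : ℂ)) * star C) i j = 0 := by
      have h5 : diagonal (fun i => (p i : ℂ)) * star C = star U * (ρ * W) := by
        rw [eρ, hC, star_mul, star_star]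
        simp only [← Matrix.mul_assoc]
        rw [hU, Matrix.one_mul]
      rw [h5, Matrix.mul_apply]
      refine Finset.sum_eq_zero fun k _ => ?_
      have := congrFun h3 k
      have h6 : (ρ * W) k j = 0 := by
        simpa [Matrix.mul_apply, mulVec, dotProduct] using this
      rw [h6, mul_zero]
    rw [Matrix.diagonal_mul, star_apply, mul_eq_zero] at h4
    rcases h4 with h4 | h4
    · have : p i = 0 := by exact_mod_cast h4
      rw [this, mul_zero]
    · rw [star_eq_zero] at h4
      simp [h4]
  refine ⟨fun t => ∑ j, ∑ i, ‖C j i‖ ^ 2 * p i * Real.log (q j + t * p i),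
    fun t => ∑ j, ∑ i, ‖C j i‖ ^ 2 * p i * (p i / (q j + t * p i)), ?_, ?_, ?_, ?_, ?_⟩
  · intro t ht
    refine HasDerivAt.fun_sum fun j _ => HasDerivAt.fun_sum fun i _ => ?_
    by_cases h0 : ‖C j i‖ ^ 2 * p i = 0
    · simp only [h0, zero_mul]
      exact hasDerivAt_const t 0
    · have hqj : 0 < q j := (hq0 j).lt_of_ne fun h => h0 (hker j i h.symm)
      have hlin : HasDerivAt (fun t => q j + t * p i) (p i) t := by
        simpa using ((hasDerivAt_id t).mul_const (p i)).const_add (q j)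
      have : q j + t * p i ≠ 0 := by
        have := mul_nonneg ht (hp0 i)
        positivity
      exact (hlin.log this).const_mul _
  · intro t ht X
    have eX : X = W * (star W * X * U) * star U := by
      simp only [Matrix.mul_assoc]
      rw [hU', Matrix.mul_one, ← Matrix.mul_assoc, hW', Matrix.one_mul]
    rw [eX, eρ, eσ, quadFun_eigen U W p q hU hW]
    exact Finset.sum_le_sum fun j _ => Finset.sum_le_sum fun i _ =>
      entry_le _ _ _ (hp0 i) (hq0 j) ht _ _
  · intro t ht
    refine ⟨W * (Matrix.of fun j i => ((p i / (q j + t * p i) : ℝ) : ℂ) * C j i) * star U, ?_⟩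
    rw [eρ, eσ, quadFun_eigen U W p q hU hW]
    exact Finset.sum_congr rfl fun j _ => Finset.sum_congr rfl fun i _ =>
      entry_eq _ _ _ (hp0 i) (hq0 j) ht _ _ rfl
  · have hm : mlog σ = W * diagonal (fun i => (Real.log (q i) : ℂ)) * star W := by
      unfold mlog
      rw [dif_pos hσh]
    have h1 : (ρ * mlog σ).trace
        = ∑ j, ∑ i, ((‖C j i‖ ^ 2 * p i * Real.log (q j) : ℝ) : ℂ) := by
      have : ρ * mlog σ = U * (diagonal (fun i => (p i : ℂ)) *
          (star C * (diagonal (fun i => (Real.log (q i) : ℂ)) * star W))) := by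
        rw [hm, hC, star_mul, star_star]
        nth_rewrite 1 [eρ]
        simp only [Matrix.mul_assoc]
      rw [this, trace_mul_comm, Matrix.mul_assoc, Matrix.mul_assoc, Matrix.mul_assoc, ← hC,
        Finset.sum_comm]
      simp only [trace, diag_apply, diagonal_mul, Matrix.mul_apply (M := star C), star_apply]
      refine Finset.sum_congr rfl fun i _ => ?_
      rw [Finset.mul_sum]
      refine Finset.sum_congr rfl fun j _ => ?_
      have := nrm (C j i)
      push_cast at this ⊢
      rw [← this]; ring
    rw [h1]
    simp only [Complex.re_sum, Complex.ofReal_re, zero_mul, add_zero]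
  · have hS : -vnEntropy ρ = ∑ j, ∑ i, ‖C j i‖ ^ 2 * p i * Real.log (p i) := by
      unfold vnEntropy
      rw [dif_pos hρh, neg_neg, Finset.sum_comm]
      refine Finset.sum_congr rfl fun i _ => ?_
      simp only [mul_assoc]
      rw [← Finset.sum_mul, hw1, one_mul]
    have hone : ∑ j, ∑ i, ‖C j i‖ ^ 2 * p i = 1 := by
      rw [Finset.sum_comm, ← hpsum]
      refine Finset.sum_congr rfl fun i _ => ?_
      rw [← Finset.sum_mul, hw1, one_mul]
    rw [hS]
    have hfun : (fun t => ∑ j, ∑ i, ‖C j i‖ ^ 2 * p i * Real.log (q j + t * p i) - Real.log t)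
        = fun t => ∑ j, ∑ i, ‖C j i‖ ^ 2 * p i * (Real.log (q j + t * p i) - Real.log t) := by
      funext t
      simp only [mul_sub, Finset.sum_sub_distrib, ← Finset.sum_mul]
      rw [hone, one_mul]
    rw [hfun]
    refine tendsto_finsetSum _ fun j _ => tendsto_finsetSum _ fun i _ => ?_
    rcases (hp0 i).eq_or_lt with h0 | h0
    · simp [← h0]
    refine Filter.Tendsto.const_mul _ ?_
    have hlim : Filter.Tendsto (fun t : ℝ => q j / t + p i) Filter.atTop (nhds (p i)) := by
      simpa using (tendsto_const_nhds.div_atTop Filter.tendsto_id).add_const (p i)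
    refine ((Real.continuousAt_log h0.ne').tendsto.comp hlim).congr' ?_
    filter_upwards [Filter.eventually_gt_atTop 0] with t ht
    have : 0 < q j + t * p i := by have := hq0 j; positivity
    rw [← Real.log_div this.ne' ht.ne', Function.comp_apply]
    congr 1
    field_simp

/-- A channel preserves inclusion of supports. -/
lemma channel_supp {n : Type*} [Fintype n] [DecidableEq n] {r : ℕ} (V : Fin r → Matrix n n ℂ)
    {ρ σ : Matrix n n ℂ} (hσ : σ.PosSemidef)
    (hsupp : ∀ v : n → ℂ, σ.mulVec v = 0 → ρ.mulVec v = 0) (v : n → ℂ)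
    (hv : (∑ j, V j * σ * (V j)ᴴ).mulVec v = 0) :
    (∑ j, V j * ρ * (V j)ᴴ).mulVec v = 0 := by
  have hps : ∀ j, (V j * σ * (V j)ᴴ).PosSemidef := fun j => hσ.mul_mul_conjTranspose_same _
  have hsum : ∑ j, star v ⬝ᵥ (V j * σ * (V j)ᴴ).mulVec v = 0 := by
    rw [← dotProduct_sum, ← sum_mulVec, hv, dotProduct_zero]
  have hz := (Finset.sum_eq_zero_iff_of_nonneg
    (fun j _ => (hps j).dotProduct_mulVec_nonneg v)).mp hsum
  rw [sum_mulVec]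
  refine Finset.sum_eq_zero fun j hj => ?_
  have h1 : star ((V j)ᴴ.mulVec v) ⬝ᵥ σ.mulVec ((V j)ᴴ.mulVec v) = 0 := by
    rw [← hz j hj, star_mulVec, conjTranspose_conjTranspose, ← dotProduct_mulVec,
      mulVec_mulVec, mulVec_mulVec, Matrix.mul_assoc]
  have h2 := hsupp _ ((hσ.dotProduct_mulVec_zero_iff _).mp h1)
  rw [Matrix.mul_assoc, ← mulVec_mulVec, ← mulVec_mulVec, h2, mulVec_zero]

/-- Monotonicity of quantum relative entropy rewritten: for density matrices with
`supp ρ ⊆ supp σ` and a channel `Φ`,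
`Tr(Φ(ρ)(−log Φ(σ))) ≤ S(Φ(ρ)) − S(ρ) + Tr(ρ(−log σ))`. -/
theorem relative_entropy_monotone_rewritten {d : ℕ}
    (ρ σ : Matrix (Fin d) (Fin d) ℂ)
    (hρ : IsDensityMatrix ρ) (hσ : IsDensityMatrix σ)
    (hsupp : ∀ v : Fin d → ℂ, σ.mulVec v = 0 → ρ.mulVec v = 0)
    (Φ : Matrix (Fin d) (Fin d) ℂ → Matrix (Fin d) (Fin d) ℂ) (hΦ : IsCPTP Φ) :
    ((Φ ρ) * (-(mlog (Φ σ)))).trace.re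
      ≤ vnEntropy (Φ ρ) - vnEntropy ρ + (ρ * (-(mlog σ))).trace.re := by
  obtain ⟨r, V, hΦV, hV⟩ := hΦ
  have hps : ∀ A : Matrix (Fin d) (Fin d) ℂ, A.PosSemidef → (Φ A).PosSemidef := by
    intro A hA
    rw [hΦV]
    exact posSemidef_sum _ fun j _ => hA.mul_mul_conjTranspose_same _
  have htr : (Φ ρ).trace = 1 := by
    rw [hΦV, trace_sum, ← hρ.2]
    simp_rw [fun j => trace_mul_comm (V j * ρ) (V j)ᴴ, ← Matrix.mul_assoc]
    rw [← trace_sum, ← Finset.sum_mul, hV, Matrix.one_mul]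
  obtain ⟨F, f, hF, hf, -, hF0, hFlim⟩ := exists_interpolation ρ σ hρ hσ.1 hsupp
  obtain ⟨G, g, hG, -, hg, hG0, hGlim⟩ := exists_interpolation (Φ ρ) (Φ σ) ⟨hps _ hρ.1, htr⟩
    (hps _ hσ.1) (by
      intro v hv
      rw [hΦV] at hv ⊢
      exact channel_supp V hσ.1 hsupp v hv)
  have hgf : ∀ t, 0 < t → g t ≤ f t := by
    intro t ht
    obtain ⟨X, hX⟩ := hg t ht
    rw [← hX, hΦV, hΦV]
    exact (quadFun_dual_le V hV hρ.1 hσ.1 ht.le X).trans (hf t ht _)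
  have hD : ∀ t, 0 ≤ t → HasDerivAt (fun t => F t - G t) (f t - g t) t :=
    fun t ht => (hF t ht).sub (hG t ht)
  have hmono : MonotoneOn (fun t => F t - G t) (Set.Ici 0) := by
    refine monotoneOn_of_deriv_nonneg (convex_Ici 0)
      (fun t ht => (hD t ht).continuousAt.continuousWithinAt)
      (fun t ht => ?_) (fun t ht => ?_)
    · exact (hD t (interior_subset ht)).differentiableAt.differentiableWithinAt
    · rw [interior_Ici] at ht
      rw [(hD t (le_of_lt ht)).deriv]
      exact sub_nonneg.mpr (hgf t ht)
  have hlim : Filter.Tendsto (fun t => F t - G t) Filter.atTop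
      (nhds (-vnEntropy ρ - -vnEntropy (Φ ρ))) := by
    refine (hFlim.sub hGlim).congr fun t => ?_
    ring
  have hle : F 0 - G 0 ≤ -vnEntropy ρ - -vnEntropy (Φ ρ) := by
    refine ge_of_tendsto hlim ?_
    filter_upwards [Filter.eventually_ge_atTop 0] with t ht
    exact hmono (Set.self_mem_Ici) ht ht
  rw [hF0, hG0] at hle
  simp only [Matrix.mul_neg, trace_neg, Complex.neg_re]
  linarith
end

section
/- Let ρ be a density matrix on a finite-dimensional Hilbert space, P an orthogonal projection with supp ρ ⊆ ran P, and Φ a quantum channel. Then S(Φ(ρ)) − S(ρ) ≥ −Tr(Φ(ρ) log Φ(P)). -/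
/-!
The claim is the monotonicity `D(Φ(ρ)‖Φ(P)) ≤ D(ρ‖P) = -S(ρ)` of the (unnormalized) relative
entropy `D(R‖T) = tr R (log R - log T)`; working with `P` itself instead of `P / tr P` makes operator
monotonicity of the logarithm unnecessary.

If `e i` are eigenvectors of `ρ` with eigenvalues `p i` and `V j` are Kraus operators of `Φ`, then
with `g (j, i) = V j P e i` one has `Φ(ρ) = ∑ p i • g gᴴ` and `Φ(P) = ∑ g gᴴ`, so it suffices to show
`D(R‖T) ≤ ∑ ‖g k‖² p k log p k` for such `R`, `T` (`relEntropy_le`). Let `r a`, `t b` be the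
eigenvalues of `R`, `T` and `C` the unitary matrix of overlaps of their eigenbases. Then `D(R‖T)` is
the classical relative entropy of the weights `|C a b|² r a` and `|C a b|² t b`, and
`r log r - r log t + t - r = ∫₀¹ u (r - t)² / ((1 - u) r + u t) du`.
For each fixed `u` the integrand satisfies the desired inequality (`quadratic_form_le`), since it
is the value at a suitable matrix `M` of an expression linear in `(R, T)` and quadratic in `M`, and
each rank-one summand of that expression is bounded by completing a square. Integration is replaced by
monotonicity of the difference of the explicit primitives (`logPrimitive`).
-/

open Matrix Complex
open scoped ComplexOrder

/-! ### The quadratic form inequality -/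

lemma re_trace_mul_diagonal {κ : Type*} [Fintype κ] [DecidableEq κ]
    (Z : Matrix κ κ ℂ) (p : κ → ℝ) :
    (Z * diagonal (fun k => (p k : ℂ))).trace.re = ∑ k, p k * (Z k k).re := by
  simp only [trace, diag_apply, mul_diagonal, re_sum, re_mul_ofReal]
  exact Finset.sum_congr rfl fun _ _ => mul_comm _ _

lemma re_trace_mul_conjTranspose {n : Type*} [Fintype n] (Z M : Matrix n n ℂ) :
    (Z * Mᴴ).trace.re = ∑ a, ∑ b, (Z a b * star (M a b)).re := by
  simp only [trace, diag_apply, Matrix.mul_apply, re_sum, conjTranspose_apply]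

/-- Monotonicity of the quadratic forms whose integral is the relative entropy. The matrices
`R = A diag(p) Aᴴ` and `T = B Bᴴ` are written in their respective eigenbases, and `C` is the
matrix of overlaps between these bases. With `M = x ∘ C` (entrywise product) the left-hand side is
`2 Re tr(Mᴴ(R - T)) - (1 - w) tr(M Mᴴ R) - w tr(Mᴴ M T)`, and this splits as a sum over the
columns `k` of `A` and `B`, each summand being bounded by completing a square. -/
lemma quadratic_form_le {n κ : Type*} [Fintype n] [DecidableEq n] [Fintype κ] [DecidableEq κ]
    (A B : Matrix n κ ℂ) (C : Matrix n n ℂ) (p : κ → ℝ) (r t : n → ℝ)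
    (hC : Cᴴ * C = 1) (hAB : A = C * B)
    (hA : A * diagonal (fun k => (p k : ℂ)) * Aᴴ = diagonal (fun a => (r a : ℂ)))
    (hB : B * Bᴴ = diagonal (fun b => (t b : ℂ)))
    (hp : ∀ k, 0 ≤ p k) (hr : ∀ a, 0 ≤ r a) (ht : ∀ b, 0 ≤ t b)
    (w : ℝ) (hw0 : 0 < w) (hw1 : w < 1) :
    ∑ a, ∑ b, normSq (C a b) * ((r a - t b) ^ 2 / ((1 - w) * r a + w * t b)) ≤
      ∑ k, ((Bᴴ * B) k k).re * ((p k - 1) ^ 2 / ((1 - w) * p k + w * 1)) := by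
  have hAA : Aᴴ * A = Bᴴ * B := by
    rw [hAB, conjTranspose_mul, Matrix.mul_assoc, ← Matrix.mul_assoc Cᴴ, hC, Matrix.one_mul]
  have hAC : Aᴴ * C = Bᴴ := by
    rw [hAB, conjTranspose_mul, Matrix.mul_assoc, hC, Matrix.mul_one]
  have hABr : A * diagonal (fun k => (p k : ℂ)) * Bᴴ = diagonal (fun a => (r a : ℂ)) * C := by
    rw [← hA, Matrix.mul_assoc, Matrix.mul_assoc, hAC, Matrix.mul_assoc]
  have hABt : A * Bᴴ = C * diagonal (fun b => (t b : ℂ)) := by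
    rw [← hB, hAB, Matrix.mul_assoc]
  set x : n → n → ℝ := fun a b => (r a - t b) / ((1 - w) * r a + w * t b) with hx
  set M : Matrix n n ℂ := Matrix.of fun a b => (x a b : ℂ) * C a b with hM
  set y : κ → ℝ := fun k => ((Bᴴ * Mᴴ * A) k k).re with hy
  set N : κ → ℝ := fun k => ((Bᴴ * B) k k).re with hN
  have hw1' : 0 < 1 - w := by linarith
  have tr1 : ∑ k, p k * y k = ∑ a, ∑ b, normSq (C a b) * (x a b * r a) := by
    have h : (Bᴴ * Mᴴ * A * diagonal (fun k => (p k : ℂ))).trace =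
        ((diagonal (fun a => (r a : ℂ)) * C) * Mᴴ).trace := by
      rw [← hABr, Matrix.mul_assoc, Matrix.mul_assoc, trace_mul_comm Bᴴ, trace_mul_comm _ Mᴴ,
        Matrix.mul_assoc]
    rw [← re_trace_mul_diagonal, h, re_trace_mul_conjTranspose]
    refine Finset.sum_congr rfl fun a _ => Finset.sum_congr rfl fun b _ => ?_
    simp [hM, diagonal_mul, normSq_apply]; ring
  have tr2 : ∑ k, y k = ∑ a, ∑ b, normSq (C a b) * (x a b * t b) := by
    have h : (Bᴴ * Mᴴ * A).trace = ((C * diagonal (fun b => (t b : ℂ))) * Mᴴ).trace := by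
      rw [← hABt, trace_mul_comm, Matrix.mul_assoc]
    have h1 : ∑ k, y k = (Bᴴ * Mᴴ * A).trace.re := by
      simp only [trace, diag_apply, re_sum, hy]
    rw [h1, h, re_trace_mul_conjTranspose]
    refine Finset.sum_congr rfl fun a _ => Finset.sum_congr rfl fun b _ => ?_
    simp [hM, mul_diagonal, normSq_apply]; ring
  have tr3 : ∑ k, p k * ((Aᴴ * M * (Mᴴ * A)) k k).re
      = ∑ a, ∑ b, normSq (C a b) * (x a b ^ 2 * r a) := by
    have h : (Aᴴ * M * (Mᴴ * A) * diagonal (fun k => (p k : ℂ))).trace =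
        ((diagonal (fun a => (r a : ℂ)) * M) * Mᴴ).trace := by
      rw [← hA, ← Matrix.mul_assoc, Matrix.mul_assoc _ A, trace_mul_comm]
      simp only [Matrix.mul_assoc]
    rw [← re_trace_mul_diagonal, h, re_trace_mul_conjTranspose]
    refine Finset.sum_congr rfl fun a _ => Finset.sum_congr rfl fun b _ => ?_
    simp [hM, diagonal_mul, normSq_apply]; ring
  have tr4 : ∑ k, ((Bᴴ * Mᴴ * (M * B)) k k).re
      = ∑ a, ∑ b, normSq (C a b) * (x a b ^ 2 * t b) := by
    have h : (Bᴴ * Mᴴ * (M * B)).trace =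
        ((M * diagonal (fun b => (t b : ℂ))) * Mᴴ).trace := by
      rw [← hB, trace_mul_comm]
      simp only [Matrix.mul_assoc]
    have h1 : ∑ k, ((Bᴴ * Mᴴ * (M * B)) k k).re = (Bᴴ * Mᴴ * (M * B)).trace.re := by
      simp only [trace, diag_apply, re_sum]
    rw [h1, h, re_trace_mul_conjTranspose]
    refine Finset.sum_congr rfl fun a _ => Finset.sum_congr rfl fun b _ => ?_
    simp [hM, mul_diagonal, normSq_apply]; ring
  have hlhs : ∑ a, ∑ b, normSq (C a b) * ((r a - t b) ^ 2 / ((1 - w) * r a + w * t b)) =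
      ∑ k, (2 * (p k - 1) * y k - (1 - w) * (p k * ((Aᴴ * M * (Mᴴ * A)) k k).re)
        - w * ((Bᴴ * Mᴴ * (M * B)) k k).re) := by
    have : ∀ k, (2 * (p k - 1) * y k - (1 - w) * (p k * ((Aᴴ * M * (Mᴴ * A)) k k).re)
        - w * ((Bᴴ * Mᴴ * (M * B)) k k).re) = 2 * (p k * y k) - 2 * y k
          - (1 - w) * (p k * ((Aᴴ * M * (Mᴴ * A)) k k).re)
        - w * ((Bᴴ * Mᴴ * (M * B)) k k).re := fun k => by ring
    simp only [this, Finset.sum_sub_distrib, ← Finset.mul_sum]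
    rw [tr1, tr2, tr3, tr4]
    simp only [Finset.mul_sum, ← Finset.sum_sub_distrib]
    refine Finset.sum_congr rfl fun a _ => Finset.sum_congr rfl fun b _ => ?_
    -- when the denominator vanishes, so do `r a` and `t b`
    have e : x a b * ((1 - w) * r a + w * t b) = r a - t b := by
      refine div_mul_cancel_of_imp fun h0 => ?_
      have h1 : 0 ≤ (1 - w) * r a := mul_nonneg hw1'.le (hr a)
      have h2 : 0 ≤ w * t b := mul_nonneg hw0.le (ht b)
      have h3 : (1 - w) * r a = 0 := by linarith
      have h4 : w * t b = 0 := by linarith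
      rw [(mul_eq_zero.1 h3).resolve_left hw1'.ne', (mul_eq_zero.1 h4).resolve_left hw0.ne',
        sub_zero]
    have e' : (r a - t b) ^ 2 / ((1 - w) * r a + w * t b) = x a b * (r a - t b) := by
      simp only [hx]; ring
    rw [e']
    linear_combination normSq (C a b) * x a b * e
  rw [hlhs]
  refine Finset.sum_le_sum fun k _ => ?_
  have hD : 0 < (1 - w) * p k + w * 1 := by
    have := mul_nonneg hw1'.le (hp k); linarith
  -- `l` is the multiplier for which `M B = l A` and `Mᴴ A = l B` in column `k` would give equality
  set l : ℝ := (p k - 1) / ((1 - w) * p k + w * 1) with hl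
  have hlD : p k - 1 = l * ((1 - w) * p k + w * 1) := (div_mul_cancel₀ _ hD.ne').symm
  have nn : ∀ Z : Matrix n κ ℂ, 0 ≤ ((Zᴴ * Z) k k).re := fun Z =>
    (Complex.le_def.1 ((posSemidef_conjTranspose_mul_self Z).diag_nonneg (i := k))).1
  have hy' : ((Aᴴ * M * B) k k).re = y k := by
    have : Aᴴ * M * B = (Bᴴ * Mᴴ * A)ᴴ := by simp [Matrix.mul_assoc]
    rw [this, conjTranspose_apply]; simp [hy]
  have s1 := nn (M * B - (l : ℂ) • A)
  have s2 := nn (Mᴴ * A - (l : ℂ) • B)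
  have e1 : ((M * B - (l : ℂ) • A)ᴴ * (M * B - (l : ℂ) • A)) k k =
      (Bᴴ * Mᴴ * (M * B)) k k - l * (Bᴴ * Mᴴ * A) k k - l * (Aᴴ * M * B) k k
        + l * l * (Bᴴ * B) k k := by
    rw [← hAA]
    simp [Matrix.sub_mul, Matrix.mul_sub, Matrix.mul_assoc]
    ring
  have e2 : ((Mᴴ * A - (l : ℂ) • B)ᴴ * (Mᴴ * A - (l : ℂ) • B)) k k =
      (Aᴴ * M * (Mᴴ * A)) k k - l * (Bᴴ * Mᴴ * A) k k - l * (Aᴴ * M * B) k k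
        + l * l * (Bᴴ * B) k k := by
    simp [Matrix.sub_mul, Matrix.mul_sub, Matrix.mul_assoc]
    ring
  rw [e1] at s1
  rw [e2] at s2
  simp only [add_re, sub_re, re_ofReal_mul, mul_assoc, hy', ← ofReal_mul] at s1 s2
  change 0 ≤ _ - l * y k - l * y k + l * (l * N k) at s1
  change 0 ≤ _ - l * y k - l * y k + l * (l * N k) at s2
  have m1 := mul_nonneg hw0.le s1
  have m2 := mul_nonneg (mul_nonneg hw1'.le (hp k)) s2
  have hrhs : N k * ((p k - 1) ^ 2 / ((1 - w) * p k + w * 1))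
      = N k * (l ^ 2 * ((1 - w) * p k + w * 1)) := by
    rw [show (p k - 1) ^ 2 / ((1 - w) * p k + w * 1) = l * (p k - 1) by rw [hl]; ring, hlD]; ring
  change _ ≤ N k * _
  rw [hrhs, hlD]
  nlinarith [m1, m2]

/-! ### The scalar primitive -/

/-- A primitive in `u` of `u (r - t)² / ((1 - u) r + u t)`. Its increment over `[0, 1]` is
`r log r - r log t + t - r`, the scalar (unnormalized) relative entropy. At `r = 0` the logarithmic
term is absent, in accordance with `0 log 0 = 0`. -/
noncomputable def logPrimitive (r t u : ℝ) : ℝ :=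
  (t - r) * u - r * Real.log ((1 - u) * r + u * t)

lemma logPrimitive_continuousOn {r t : ℝ} (hr : 0 ≤ r) (ht : 0 ≤ t) (h : t = 0 → r = 0) :
    ContinuousOn (logPrimitive r t) (Set.Icc 0 1) := by
  rcases hr.eq_or_lt with rfl | hr
  · unfold logPrimitive; simp only [zero_mul, sub_zero]; fun_prop
  · have ht : 0 < t := lt_of_le_of_ne ht fun e => hr.ne' (h e.symm)
    unfold logPrimitive
    refine ContinuousOn.sub (by fun_prop) (ContinuousOn.mul (by fun_prop)
      (ContinuousOn.log (by fun_prop) fun u hu => ?_))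
    rcases hu.1.eq_or_lt with rfl | h0
    · simpa using hr.ne'
    · have := mul_nonneg (sub_nonneg.2 hu.2) hr.le
      have := mul_pos h0 ht
      linarith

lemma hasDerivAt_logPrimitive {r t u : ℝ} (hr : 0 ≤ r) (ht : 0 ≤ t) (h0 : 0 < u) (h1 : u < 1) :
    HasDerivAt (logPrimitive r t) (u * ((r - t) ^ 2 / ((1 - u) * r + u * t))) u := by
  by_cases hD : (1 - u) * r + u * t = 0
  · have a1 := mul_nonneg (sub_nonneg.2 h1.le) hr
    have a2 := mul_nonneg h0.le ht
    have r0 : r = 0 := by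
      have : (1 - u) * r = 0 := by linarith
      rcases mul_eq_zero.1 this with h | h
      · linarith
      · exact h
    have t0 : t = 0 := by
      have : u * t = 0 := by linarith
      rcases mul_eq_zero.1 this with h | h
      · linarith
      · exact h
    subst r0 t0
    have : logPrimitive 0 0 = fun _ => 0 := by funext u; simp [logPrimitive]
    rw [this]; simpa using hasDerivAt_const u (0 : ℝ)
  · have e1 : HasDerivAt (fun u : ℝ => (1 - u) * r + u * t) (t - r) u := by
      exact ((((hasDerivAt_id u).const_sub 1).mul_const r).add
        ((hasDerivAt_id u).mul_const t)).congr_deriv (by ring)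
    have e2 := ((hasDerivAt_id u).const_mul (t - r)).sub ((e1.log hD).const_mul r)
    refine e2.congr_deriv ?_
    have e3 : ((1 - u) * r + u * t) / ((1 - u) * r + u * t) = 1 := div_self hD
    linear_combination (r - t) * e3

/-! ### The relative entropy bound -/

/-- If `R = ∑ p k • g k (g k)ᴴ` and `T = ∑ g k (g k)ᴴ`, then
`tr R (log R - log T) ≤ ∑ ‖g k‖² p k log p k`. The columns of `A` and of `B` are the coordinates
of the vectors `g k` in eigenbases of `R` and of `T`; `C` is the overlap matrix of these bases. -/
lemma relEntropy_le {n κ : Type*} [Fintype n] [DecidableEq n] [Fintype κ] [DecidableEq κ]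
    (A B : Matrix n κ ℂ) (C : Matrix n n ℂ) (p : κ → ℝ) (r t : n → ℝ)
    (hC : Cᴴ * C = 1) (hAB : A = C * B)
    (hA : A * diagonal (fun k => (p k : ℂ)) * Aᴴ = diagonal (fun a => (r a : ℂ)))
    (hB : B * Bᴴ = diagonal (fun b => (t b : ℂ)))
    (hp : ∀ k, 0 ≤ p k) (hr : ∀ a, 0 ≤ r a) (ht : ∀ b, 0 ≤ t b) :
    ∑ a, r a * Real.log (r a) - ∑ a, ∑ b, normSq (C a b) * (r a * Real.log (t b)) ≤
      ∑ k, ((Bᴴ * B) k k).re * (p k * Real.log (p k)) := by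
  have hC' : C * Cᴴ = 1 := mul_eq_one_comm.1 hC
  have hAA : Aᴴ * A = Bᴴ * B := by
    rw [hAB, conjTranspose_mul, Matrix.mul_assoc, ← Matrix.mul_assoc Cᴴ, hC, Matrix.one_mul]
  have hAC : Aᴴ * C = Bᴴ := by
    rw [hAB, conjTranspose_mul, Matrix.mul_assoc, hC, Matrix.mul_one]
  have hABr : A * diagonal (fun k => (p k : ℂ)) * Bᴴ = diagonal (fun a => (r a : ℂ)) * C := by
    rw [← hA, Matrix.mul_assoc, Matrix.mul_assoc, hAC, Matrix.mul_assoc]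
  -- the kernel of `T` lies in the kernel of `R`, so `t b = 0 < r a` only occurs with weight zero
  have hsupp : ∀ a b, C a b ≠ 0 → t b = 0 → r a = 0 := by
    intro a b hc h0
    have hBb : ∀ k, B b k = 0 := by
      have h1 : ∑ k, normSq (B b k) = 0 := by
        have := congrArg Complex.re (congrFun (congrFun hB b) b)
        simpa [Matrix.mul_apply, h0, mul_conj, ← normSq_apply] using this
      intro k
      exact normSq_eq_zero.1
        ((Finset.sum_eq_zero_iff_of_nonneg fun k _ => normSq_nonneg _).1 h1 k (Finset.mem_univ k))
    have h2 := congrFun (congrFun hABr a) b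
    rw [Matrix.mul_apply, diagonal_mul] at h2
    simp only [conjTranspose_apply, hBb, star_zero, mul_zero, Finset.sum_const_zero] at h2
    exact_mod_cast (mul_eq_zero.1 h2.symm).resolve_right hc
  have row : ∀ a, ∑ b, normSq (C a b) = 1 := fun a => by
    have := congrArg Complex.re (congrFun (congrFun hC' a) a)
    simpa [Matrix.mul_apply, mul_conj, ← normSq_apply] using this
  have col : ∀ b, ∑ a, normSq (C a b) = 1 := fun b => by
    have := congrArg Complex.re (congrFun (congrFun hC b) b)
    simpa [Matrix.mul_apply, mul_comm, mul_conj, ← normSq_apply] using this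
  have trR : ∑ k, ((Bᴴ * B) k k).re * p k = ∑ a, r a := by
    have h := congrArg Complex.re (congrArg trace hA)
    rw [trace_mul_comm, ← Matrix.mul_assoc, re_trace_mul_diagonal, hAA, trace_diagonal, re_sum] at h
    simpa [mul_comm] using h
  have trT : ∑ k, ((Bᴴ * B) k k).re = ∑ b, t b := by
    have h := congrArg Complex.re (congrArg trace hB)
    rw [trace_mul_comm, trace_diagonal, re_sum, trace, re_sum] at h
    simpa using h
  set N : κ → ℝ := fun k => ((Bᴴ * B) k k).re with hN
  -- `F 1 - F 0` is the difference of the two sides of the claim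
  set F : ℝ → ℝ := fun u => ∑ k, N k * logPrimitive (p k) 1 u -
      ∑ a, ∑ b, normSq (C a b) * logPrimitive (r a) (t b) u
    with hF
  have hder : ∀ u, 0 < u → u < 1 → HasDerivAt F
      (∑ k, N k * (u * ((p k - 1) ^ 2 / ((1 - u) * p k + u * 1))) -
        ∑ a, ∑ b, normSq (C a b) *
          (u * ((r a - t b) ^ 2 / ((1 - u) * r a + u * t b)))) u := by
    intro u h0 h1
    refine HasDerivAt.sub (HasDerivAt.fun_sum fun k _ => ?_)
      (HasDerivAt.fun_sum fun a _ => HasDerivAt.fun_sum fun b _ => ?_)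
    · exact (hasDerivAt_logPrimitive (hp k) zero_le_one h0 h1).const_mul _
    · exact (hasDerivAt_logPrimitive (hr a) (ht b) h0 h1).const_mul _
  have hmono : MonotoneOn F (Set.Icc 0 1) := by
    refine monotoneOn_of_deriv_nonneg (convex_Icc 0 1) ?_ ?_ ?_
    · refine ContinuousOn.sub (continuousOn_finsetSum _ fun k _ => ?_)
        (continuousOn_finsetSum _ fun a _ => continuousOn_finsetSum _ fun b _ => ?_)
      · exact continuousOn_const.mul
          (logPrimitive_continuousOn (hp k) zero_le_one fun h => absurd h one_ne_zero)
      · by_cases hc : C a b = 0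
        · simp only [hc, map_zero, zero_mul]; exact continuousOn_const
        · exact continuousOn_const.mul (logPrimitive_continuousOn (hr a) (ht b) (hsupp a b hc))
    · rw [interior_Icc]
      exact fun u hu => (hder u hu.1 hu.2).differentiableAt.differentiableWithinAt
    · rw [interior_Icc]
      intro u hu
      rw [(hder u hu.1 hu.2).deriv]
      have h := mul_le_mul_of_nonneg_left
        (quadratic_form_le A B C p r t hC hAB hA hB hp hr ht u hu.1 hu.2) hu.1.le
      simp only [Finset.mul_sum] at h
      simp only [mul_left_comm _ u]
      exact sub_nonneg.2 h
  have h01 := hmono (Set.left_mem_Icc.2 zero_le_one) (Set.right_mem_Icc.2 zero_le_one) zero_le_one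
  have F0 : F 0 = -∑ k, N k * (p k * Real.log (p k)) + ∑ a, r a * Real.log (r a) := by
    have : ∑ a, r a * Real.log (r a) = ∑ a, ∑ b, normSq (C a b) * (r a * Real.log (r a)) := by
      simp only [← Finset.sum_mul, row, one_mul]
    rw [this]
    simp [hF, logPrimitive]
  have F1 : F 1 = ∑ a, ∑ b, normSq (C a b) * (r a * Real.log (t b)) := by
    have e1 : ∑ k, N k * logPrimitive (p k) 1 1 = ∑ b, t b - ∑ a, r a := by
      rw [← trT, ← trR, ← Finset.sum_sub_distrib]
      refine Finset.sum_congr rfl fun k _ => ?_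
      simp [logPrimitive]; ring
    have e2 : ∑ b, t b = ∑ a, ∑ b, normSq (C a b) * t b := by
      rw [Finset.sum_comm]; simp only [← Finset.sum_mul, col, one_mul]
    have e3 : ∑ a, r a = ∑ a, ∑ b, normSq (C a b) * r a := by
      simp only [← Finset.sum_mul, row, one_mul]
    simp only [hF]
    rw [e1, e2, e3]
    simp only [← Finset.sum_sub_distrib]
    refine Finset.sum_congr rfl fun a _ => Finset.sum_congr rfl fun b _ => ?_
    simp [logPrimitive]; ring
  rw [F0, F1] at h01
  linarith

/-! ### Application to the channel -/

lemma conj_eigenvectorUnitary {n : Type*} [Fintype n] [DecidableEq n] {X : Matrix n n ℂ}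
    (h : X.IsHermitian) :
    (h.eigenvectorUnitary : Matrix n n ℂ)ᴴ * X * (h.eigenvectorUnitary : Matrix n n ℂ) =
      diagonal (fun i => (h.eigenvalues i : ℂ)) := by
  have := h.conjStarAlgAut_star_eigenvectorUnitary
  rw [Unitary.conjStarAlgAut_star_apply] at this
  exact this

/-- Proposition 1 (finite-dimensional): if `P` is an orthogonal projection whose range
contains the support of the density matrix `ρ`, then for any channel `Φ`,
`S(Φ(ρ)) − S(ρ) ≥ −Tr(Φ(ρ) log Φ(P))`. -/
theorem entropy_gain_lower_bound {d : ℕ}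
    (ρ P : Matrix (Fin d) (Fin d) ℂ)
    (hρ : IsDensityMatrix ρ)
    (hP : Pᴴ = P ∧ P * P = P)
    (hsupp : P * ρ = ρ)
    (Φ : Matrix (Fin d) (Fin d) ℂ → Matrix (Fin d) (Fin d) ℂ) (hΦ : IsCPTP Φ) :
    vnEntropy (Φ ρ) - vnEntropy ρ ≥ -(((Φ ρ) * mlog (Φ P)).trace.re) := by
  obtain ⟨m, V, hV, hV1⟩ := hΦ
  obtain ⟨hPh, hPP⟩ := hP
  have hρh := hρ.1.isHermitian
  have hsupp' : ρ * P = ρ := by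
    have := congrArg conjTranspose hsupp
    rwa [conjTranspose_mul, hPh, hρh.eq] at this
  have hPpos : P.PosSemidef := by
    have := posSemidef_conjTranspose_mul_self P
    rwa [hPh, hPP] at this
  have hpos : ∀ X : Matrix (Fin d) (Fin d) ℂ, X.PosSemidef → (Φ X).PosSemidef := fun X hX => by
    rw [hV]
    exact posSemidef_sum _ fun j _ => hX.mul_mul_conjTranspose_same (V j)
  have hR := hpos ρ hρ.1
  have hT := hpos P hPpos
  set U : Matrix (Fin d) (Fin d) ℂ := hR.isHermitian.eigenvectorUnitary.1
  set W : Matrix (Fin d) (Fin d) ℂ := hT.isHermitian.eigenvectorUnitary.1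
  set E : Matrix (Fin d) (Fin d) ℂ := hρh.eigenvectorUnitary.1
  have uU : U * Uᴴ = 1 := Unitary.coe_mul_star_self _
  have uW : W * Wᴴ = 1 := Unitary.coe_mul_star_self _
  have uW' : Wᴴ * W = 1 := Unitary.coe_star_mul_self _
  have uE : E * Eᴴ = 1 := Unitary.coe_mul_star_self _
  have sU : Uᴴ * Φ ρ * U = _ := conj_eigenvectorUnitary hR.isHermitian
  have sW : Wᴴ * Φ P * W = _ := conj_eigenvectorUnitary hT.isHermitian
  have sE : Eᴴ * ρ * E = _ := conj_eigenvectorUnitary hρh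
  set r := hR.isHermitian.eigenvalues
  set t := hT.isHermitian.eigenvalues
  set p := hρh.eigenvalues
  have sE' : ρ = E * diagonal (fun i => (p i : ℂ)) * Eᴴ := by
    rw [← sE]
    simp only [← Matrix.mul_assoc, uE, Matrix.one_mul]
    rw [Matrix.mul_assoc, uE, Matrix.mul_one]
  -- the columns of `K` are the vectors `V j * P * e i`, for `e i` the eigenvectors of `ρ`
  set K : Matrix (Fin d) (Fin m × Fin d) ℂ := of fun a k => (V k.1 * P * E) a k.2 with hK
  have hKp : K * diagonal (fun k => ((fun k : Fin m × Fin d => p k.2) k : ℂ)) * Kᴴ = Φ ρ := by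
    have h : ∀ j, V j * ρ * (V j)ᴴ =
        (V j * P * E) * diagonal (fun i => (p i : ℂ)) * (V j * P * E)ᴴ := fun j => by
      calc V j * ρ * (V j)ᴴ = V j * (P * ρ * P) * (V j)ᴴ := by rw [hsupp, hsupp']
        _ = _ := by
          nth_rw 1 [sE']
          simp only [conjTranspose_mul, hPh, Matrix.mul_assoc]
    rw [hV]
    simp only [h]
    ext a b
    simp only [Matrix.mul_apply (N := Kᴴ), Matrix.sum_apply, mul_diagonal, Fintype.sum_prod_type]
    refine Finset.sum_congr rfl fun j _ => ?_
    rw [Matrix.mul_apply]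
    refine Finset.sum_congr rfl fun i _ => ?_
    simp only [mul_diagonal, hK, conjTranspose_apply, of_apply]
  have hK1 : K * Kᴴ = Φ P := by
    have h : ∀ j, V j * P * (V j)ᴴ = (V j * P * E) * (V j * P * E)ᴴ := fun j => by
      calc V j * P * (V j)ᴴ = V j * (P * (E * Eᴴ) * P) * (V j)ᴴ := by
            rw [uE, Matrix.mul_one, hPP]
        _ = _ := by simp only [conjTranspose_mul, hPh, Matrix.mul_assoc]
    rw [hV]
    simp only [h]
    ext a b
    simp only [Matrix.mul_apply (N := Kᴴ), Matrix.sum_apply, Fintype.sum_prod_type]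
    refine Finset.sum_congr rfl fun j _ => ?_
    rw [Matrix.mul_apply]
    refine Finset.sum_congr rfl fun i _ => ?_
    simp only [hK, conjTranspose_apply, of_apply]
  have key := relEntropy_le (Uᴴ * K) (Wᴴ * K) (Uᴴ * W) (fun k : Fin m × Fin d => p k.2) r t
    (by
      rw [conjTranspose_mul, conjTranspose_conjTranspose, Matrix.mul_assoc, ← Matrix.mul_assoc U,
        uU, Matrix.one_mul, uW'])
    (by rw [Matrix.mul_assoc, ← Matrix.mul_assoc W, uW, Matrix.one_mul])
    (by
      rw [← sU, ← hKp]
      simp only [conjTranspose_mul, conjTranspose_conjTranspose, Matrix.mul_assoc])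
    (by
      rw [← sW, ← hK1]
      simp only [conjTranspose_mul, conjTranspose_conjTranspose, Matrix.mul_assoc])
    (fun k => hρ.1.eigenvalues_nonneg _) (fun a => hR.eigenvalues_nonneg _)
    (fun b => hT.eigenvalues_nonneg _)
  have hKK : (Wᴴ * K)ᴴ * (Wᴴ * K) = Kᴴ * K := by
    rw [conjTranspose_mul, conjTranspose_conjTranspose, Matrix.mul_assoc, ← Matrix.mul_assoc W,
      uW, Matrix.one_mul]
  have hwt : ∀ i, ∑ j, (Kᴴ * K) (j, i) (j, i) = (Eᴴ * P * E) i i := fun i => by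
    have h : Eᴴ * P * E = ∑ j, (V j * P * E)ᴴ * (V j * P * E) := by
      calc Eᴴ * P * E = Eᴴ * P * (∑ j, (V j)ᴴ * V j) * P * E := by
            rw [hV1, Matrix.mul_one, Matrix.mul_assoc Eᴴ P P, hPP]
        _ = _ := by
          simp only [Finset.mul_sum, Finset.sum_mul, conjTranspose_mul, hPh, Matrix.mul_assoc]
    rw [h, Matrix.sum_apply]
    refine Finset.sum_congr rfl fun j _ => ?_
    rw [Matrix.mul_apply, Matrix.mul_apply]
    simp only [hK, conjTranspose_apply, of_apply]
  -- `P e i = e i` unless `p i = 0`, so the weight of `p i` is `1` whenever it matters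
  have hwp : ∀ i, ((Eᴴ * P * E) i i).re * p i = p i := fun i => by
    have h : Eᴴ * P * E * diagonal (fun i => (p i : ℂ)) = diagonal (fun i => (p i : ℂ)) := by
      calc Eᴴ * P * E * diagonal (fun i => (p i : ℂ))
          = Eᴴ * P * (E * Eᴴ) * ρ * E := by rw [← sE]; simp only [Matrix.mul_assoc]
        _ = Eᴴ * (P * ρ) * E := by rw [uE]; simp only [Matrix.mul_one, Matrix.mul_assoc]
        _ = _ := by rw [hsupp, sE]
    have := congrArg Complex.re (congrFun (congrFun h i) i)
    rw [mul_diagonal, re_mul_ofReal, diagonal_apply_eq, ofReal_re] at this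
    exact this
  have hsum : ∑ k : Fin m × Fin d, (((Wᴴ * K)ᴴ * (Wᴴ * K)) k k).re * (p k.2 * Real.log (p k.2)) =
      ∑ i, p i * Real.log (p i) := by
    rw [hKK, Fintype.sum_prod_type, Finset.sum_comm]
    refine Finset.sum_congr rfl fun i _ => ?_
    simp only [← Finset.sum_mul]
    rw [← re_sum, hwt, ← mul_assoc, hwp]
  have htr : ((Φ ρ) * mlog (Φ P)).trace.re =
      ∑ a, ∑ b, normSq ((Uᴴ * W) a b) * (r a * Real.log (t b)) := by
    have h1 : ((Φ ρ) * mlog (Φ P)).trace =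
        (diagonal (fun a => (r a : ℂ)) * (Uᴴ * W) * diagonal (fun b => (Real.log (t b) : ℂ))
          * (Uᴴ * W)ᴴ).trace := by
      have h2 : mlog (Φ P) = W * diagonal (fun b => (Real.log (t b) : ℂ)) * Wᴴ := by
        rw [mlog, dif_pos hT.isHermitian]; rfl
      have h3 : Φ ρ = U * diagonal (fun a => (r a : ℂ)) * Uᴴ := by
        rw [← sU]
        simp only [← Matrix.mul_assoc, uU, Matrix.one_mul]
        rw [Matrix.mul_assoc, uU, Matrix.mul_one]
      rw [h2, h3, Matrix.mul_assoc, Matrix.mul_assoc, trace_mul_comm]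
      simp only [conjTranspose_mul, conjTranspose_conjTranspose, Matrix.mul_assoc]
    rw [h1, re_trace_mul_conjTranspose]
    refine Finset.sum_congr rfl fun a _ => Finset.sum_congr rfl fun b _ => ?_
    rw [mul_diagonal, diagonal_mul]
    generalize (Uᴴ * W) a b = c
    rw [normSq_apply, star_def]
    simp only [mul_re, mul_im, ofReal_re, ofReal_im, conj_re, conj_im]
    ring
  have hS : vnEntropy (Φ ρ) = -∑ a, r a * Real.log (r a) := dif_pos hR.isHermitian
  have hS' : vnEntropy ρ = -∑ i, p i * Real.log (p i) := dif_pos hρh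
  rw [hS, hS', htr]
  rw [hsum] at key
  linarith
end
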